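/- Let a ∈ [0,1], b ∈ [1/2,1], and let h be the homothety of ℝ² with center (0,2) and ratio 2 − b. Then U_b ⊆ h(L_a). -/

import Mathlib

/-- The 7-gon `L_a` with vertices (0, 2a/(1+a)), (±1,1), (±2,2), (±1,3). -/
noncomputable def L (a : ℝ) : Set (ℝ × ℝ) :=
  convexHull ℝ {((0 : ℝ), 2 * a / (1 + a)), (1, 1), (-1, 1), (2, 2), (-2, 2), (1, 3), (-1, 3)}

/-- The polygon `U_a` from Definition 2.1. -/
noncomputable def U (a : ℝ) : Set (ℝ × ℝ) :=
  if a < 1 / 2 then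
    convexHull ℝ {((a : ℝ), a), (-a, a), (2 + a, 2 - a), (-(2 + a), 2 - a),
      (3 - a, 3 - a), (-(3 - a), 3 - a), (3 - 2 * a, 3), (-(3 - 2 * a), 3),
      (a, 4 - a), (-a, 4 - a)}
  else
    convexHull ℝ {((a : ℝ), a), (-a, a), (3 - 2 * a, 1), (-(3 - 2 * a), 1),
      (3 - a, 1 + a), (-(3 - a), 1 + a), (3 - a, 3 - a), (-(3 - a), 3 - a),
      (3 - 2 * a, 3), (-(3 - 2 * a), 3), (a, 4 - a), (-a, 4 - a)}

/-!
The hexagon with vertices `(±1, 1)`, `(±2, 2)`, `(±1, 3)` lies in `L a`, wherever the apex is. It is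
the unit ball about `(0, 2)` of the seminorm `max |y| ((|x| + |y|) / 2)`, so the homothety with
center `(0, 2)` and ratio `2 - b` takes it to the ball of radius `2 - b`. For `b ≤ 1` all vertices
of `U b` have distance at most `2 - b` from `(0, 2)` in this seminorm, and balls are convex.
-/

open AffineMap

open scoped NNReal

theorem image_homothety_seminorm_closedBall {𝕜 E : Type*} [NormedField 𝕜] [AddCommGroup E]
    [Module 𝕜 E] (p : Seminorm 𝕜 E) (c : E) {k : 𝕜} (hk : k ≠ 0) (r : ℝ) :
    homothety c k '' p.closedBall c r = p.closedBall c (‖k‖ * r) := by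
  have mem_iff (x : E) : homothety c k x ∈ p.closedBall c (‖k‖ * r) ↔ x ∈ p.closedBall c r := by
    simp [homothety_apply, Seminorm.mem_closedBall, map_smul_eq_mul, hk]
  ext y
  have hy : homothety c k (homothety c k⁻¹ y) = y :=
    (homothety_eq_iff_of_mul_eq_one (inv_mul_cancel₀ hk)).mp rfl
  constructor
  · rintro ⟨x, hx, rfl⟩
    exact (mem_iff x).mpr hx
  · intro hball
    exact ⟨_, (mem_iff _).mp (by rwa [hy]), hy⟩

theorem mk_lineMap_mem_of_abs_le_lineMap {F : Type*} [AddCommGroup F] [Module ℝ F]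
    {S : Set (ℝ × F)} (hS : Convex ℝ S) {u v : ℝ} {c d : F} (hu : (u, c) ∈ S) (hu' : (-u, c) ∈ S)
    (hv : (v, d) ∈ S) (hv' : (-v, d) ∈ S) {t : ℝ} (ht : t ∈ Set.Icc (0 : ℝ) 1) {x : ℝ}
    (hx : |x| ≤ lineMap u v t) : (x, lineMap c d t) ∈ S := by
  have right_leg : (lineMap u v t, lineMap c d t) ∈ S := hS.lineMap_mem hu hv ht
  have left_leg : (-lineMap u v t, lineMap c d t) ∈ S := by
    have neg_lineMap : lineMap (-u) (-v) t = -lineMap u v t := by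
      simp only [lineMap_apply_ring']; ring
    exact neg_lineMap ▸ hS.lineMap_mem hu' hv' ht
  apply hS.segment_subset left_leg right_leg
  rw [← Prod.image_mk_segment_left]
  exact Set.mem_image_of_mem _ (Icc_subset_segment (abs_le.mp hx))

/-- The seminorm `max |y| ((|x| + |y|) / 2)` on the plane, whose unit ball is the hexagon with
vertices `(±1, ±1)`, `(±2, 0)`. Being a seminorm, it provides convexity and scaling of hexagons. -/
noncomputable def hexagonSeminorm : Seminorm ℝ (ℝ × ℝ) :=
  let absFst := (normSeminorm ℝ ℝ).comp (LinearMap.fst ℝ ℝ ℝ)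
  let absSnd := (normSeminorm ℝ ℝ).comp (LinearMap.snd ℝ ℝ ℝ)
  absSnd ⊔ (1 / 2 : ℝ≥0) • (absFst + absSnd)

theorem hexagonSeminorm_apply (p : ℝ × ℝ) :
    hexagonSeminorm p = max |p.2| ((|p.1| + |p.2|) / 2) := by
  simp [hexagonSeminorm, NNReal.smul_def, div_eq_inv_mul, mul_add]

theorem mk_mem_closedBall_hexagonSeminorm {x y r : ℝ} {c : ℝ × ℝ} :
    (x, y) ∈ hexagonSeminorm.closedBall c r ↔
      |y - c.2| ≤ r ∧ |x - c.1| + |y - c.2| ≤ 2 * r := by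
  simp [Seminorm.mem_closedBall, hexagonSeminorm_apply, div_le_iff₀', sub_eq_add_neg]

theorem closedBall_hexagonSeminorm_subset_L (a : ℝ) :
    hexagonSeminorm.closedBall (0, 2) 1 ⊆ L a := by
  rintro ⟨x, y⟩ hxy
  obtain ⟨hy, hx⟩ : |y - 2| ≤ 1 ∧ |x| + |y - 2| ≤ 2 := by
    simpa using mk_mem_closedBall_hexagonSeminorm.mp hxy
  have vertices_subset := subset_convexHull ℝ
    {((0 : ℝ), 2 * a / (1 + a)), (1, 1), (-1, 1), (2, 2), (-2, 2), (1, 3), (-1, 3)}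
  have mem_half (d : ℝ) (hd : (1, d) ∈ L a) (hd' : (-1, d) ∈ L a) :
      (x, lineMap 2 d |y - 2|) ∈ L a :=
    mk_lineMap_mem_of_abs_le_lineMap (convex_convexHull ℝ _) (u := 2) (v := 1)
      (vertices_subset (by simp)) (vertices_subset (by simp)) hd hd'
      ⟨abs_nonneg _, hy⟩ (by rw [lineMap_apply_ring']; linarith)
  rcases le_total 2 y with hy2 | hy2
  · have height_eq : lineMap 2 3 |y - 2| = y := by
      rw [lineMap_apply_ring', abs_of_nonneg (sub_nonneg.mpr hy2)]; ring
    exact height_eq ▸ mem_half 3 (vertices_subset (by simp)) (vertices_subset (by simp))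
  · have height_eq : lineMap 2 1 |y - 2| = y := by
      rw [lineMap_apply_ring', abs_of_nonpos (sub_nonpos.mpr hy2)]; ring
    exact height_eq ▸ mem_half 1 (vertices_subset (by simp)) (vertices_subset (by simp))

theorem U_subset_closedBall_hexagonSeminorm {b : ℝ} (hb : b ≤ 1) :
    U b ⊆ hexagonSeminorm.closedBall (0, 2) (2 - b) := by
  have mem {x y : ℝ} (hy : |y - 2| ≤ 2 - b) (hxy : |x| + |y - 2| ≤ 2 * (2 - b)) :
      (x, y) ∈ hexagonSeminorm.closedBall (0, 2) (2 - b) := by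
    simpa only [mk_mem_closedBall_hexagonSeminorm, sub_zero] using And.intro hy hxy
  have neg_mem {x y : ℝ} (h : (x, y) ∈ hexagonSeminorm.closedBall (0, 2) (2 - b)) :
      (-x, y) ∈ hexagonSeminorm.closedBall (0, 2) (2 - b) := by
    simpa only [mk_mem_closedBall_hexagonSeminorm, sub_zero, abs_neg] using h
  have bottom_mem : (b, b) ∈ hexagonSeminorm.closedBall (0, 2) (2 - b) := mem (by grind) (by grind)
  have lower_mem : (3 - 2 * b, 1) ∈ hexagonSeminorm.closedBall (0, 2) (2 - b) :=
    mem (by grind) (by grind)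
  have lower_mid_mem : (3 - b, 1 + b) ∈ hexagonSeminorm.closedBall (0, 2) (2 - b) :=
    mem (by grind) (by grind)
  have upper_mid_mem : (3 - b, 3 - b) ∈ hexagonSeminorm.closedBall (0, 2) (2 - b) :=
    mem (by grind) (by grind)
  have upper_mem : (3 - 2 * b, 3) ∈ hexagonSeminorm.closedBall (0, 2) (2 - b) :=
    mem (by grind) (by grind)
  have top_mem : (b, 4 - b) ∈ hexagonSeminorm.closedBall (0, 2) (2 - b) := mem (by grind) (by grind)
  rw [U]
  split_ifs with hb_half <;>
    refine convexHull_min ?_ (hexagonSeminorm.convex_closedBall (0, 2) (2 - b)) <;>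
    simp only [Set.insert_subset_iff, Set.singleton_subset_iff]
  · have side_mem : (2 + b, 2 - b) ∈ hexagonSeminorm.closedBall (0, 2) (2 - b) :=
      mem (by grind) (by grind)
    exact ⟨bottom_mem, neg_mem bottom_mem, side_mem, neg_mem side_mem, upper_mid_mem,
      neg_mem upper_mid_mem, upper_mem, neg_mem upper_mem, top_mem, neg_mem top_mem⟩
  · exact ⟨bottom_mem, neg_mem bottom_mem, lower_mem, neg_mem lower_mem, lower_mid_mem,
      neg_mem lower_mid_mem, upper_mid_mem, neg_mem upper_mid_mem, upper_mem, neg_mem upper_mem,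
      top_mem, neg_mem top_mem⟩

theorem stmt_3_general (a : ℝ) {b : ℝ} (hb : b ≤ 1) :
    U b ⊆ homothety ((0 : ℝ), (2 : ℝ)) (2 - b) '' L a := by
  have hr : 0 < 2 - b := by linarith
  calc U b ⊆ hexagonSeminorm.closedBall (0, 2) (2 - b) := U_subset_closedBall_hexagonSeminorm hb
    _ = homothety ((0 : ℝ), (2 : ℝ)) (2 - b) '' hexagonSeminorm.closedBall (0, 2) 1 := by
      rw [image_homothety_seminorm_closedBall _ _ hr.ne', mul_one, Real.norm_of_nonneg hr.le]
    _ ⊆ homothety ((0 : ℝ), (2 : ℝ)) (2 - b) '' L a :=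
      Set.image_mono (closedBall_hexagonSeminorm_subset_L a)

theorem stmt_3 (a b : ℝ) (ha : a ∈ Set.Icc (0 : ℝ) 1) (hb : b ∈ Set.Icc (1 / 2 : ℝ) 1) :
    U b ⊆ AffineMap.homothety ((0 : ℝ), (2 : ℝ)) (2 - b) '' L a :=
  stmt_3_general a hb.2
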